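/- Let d, k ∈ ℕ, let (X, ℬ, μ, (T_g)_{g∈ℤ^d}) be a ℤ^d-measure-preserving system, let H₁,…,H_k, H be subgroups of ℤ^d, and let f ∈ L^∞(μ). Consider the product ℤ^{2d}-measure-preserving system (X×X, ℬ⊗ℬ, μ×μ, (T_g×T_h)_{(g,h)∈ℤ^{2d}}), and for a subgroup H' ⊆ ℤ^d let H'^{[1]} := {(a,a) : a ∈ H'} ⊆ ℤ^{2d} be its diagonal copy. Then ⦀f⊗conj(f)⦀_{H₁^{[1]},…,H_k^{[1]}} ≤ ⦀f⦀²_{H,H₁,…,H_k}, where the left-hand seminorm is computed in the product system, (f⊗conj(f))(x,y) := f(x)·conj(f(y)), and the seminorms are the iterated upper Host–Kra seminorms defined in the context. -/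

import Mathlib

open MeasureTheory Filter Finset
open scoped ENNReal

noncomputable section

/-- The σ-algebra of measurable sets invariant under every transformation of the
family `T`. -/
def invSigma {ι X : Type*} [MeasurableSpace X] (T : ι → X → X) : MeasurableSpace X where
  MeasurableSet' A := MeasurableSet A ∧ ∀ a, T a ⁻¹' A = A
  measurableSet_empty := ⟨MeasurableSet.empty, fun _ => Set.preimage_empty⟩
  measurableSet_compl A hA := ⟨hA.1.compl, fun a => by rw [Set.preimage_compl, hA.2 a]⟩
  measurableSet_iUnion f hf :=
    ⟨MeasurableSet.iUnion fun n => (hf n).1, fun a => by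
      simp only [Set.preimage_iUnion]
      exact Set.iUnion_congr fun n => (hf n).2 a⟩

/-- The `2^{m+1}`-th power of the iterated (upper) Host–Kra seminorm of `f` with respect
to the `m+1` subgroups `H 0, …, H m` of `G`, computed using the boxes `box N`:
`⦀f⦀²_{H'} = ∫ |E(f|𝓘(H'))|² dμ`, and recursively
`⦀f⦀^{2^m}_{H'₁,…,H'_m} = limsup_N avg_{g ∈ H'_m ∩ box N} ⦀f·conj(f∘T_g)⦀^{2^{m−1}}_{H'₁,…,H'_{m−1}}`. -/
def hkPow {G X : Type*} [AddCommGroup G] [MeasurableSpace X]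
    (box : ℕ → Finset G) (μ : Measure X) (T : G → X → X) :
    (m : ℕ) → (Fin (m + 1) → AddSubgroup G) → (X → ℂ) → ℝ
  | 0, H, f => ∫ x, ‖(μ[f | invSigma (fun a : ↥(H 0) => T ↑a)]) x‖ ^ 2 ∂μ
  | m + 1, H, f =>
      limsup (fun N : ℕ =>
          letI := Classical.decPred fun g : G => g ∈ H (Fin.last (m + 1))
          ((((box N).filter fun g => g ∈ H (Fin.last (m + 1))).card : ℝ))⁻¹ *
            ∑ g ∈ (box N).filter fun g => g ∈ H (Fin.last (m + 1)),
              hkPow box μ T m (fun i => H i.castSucc)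
                (fun x => f x * (starRingEnd ℂ) (f (T g x))))
        atTop

/-- The box `[−N, N]^d` in `ℤ^d`. -/
def boxZ (d : ℕ) (N : ℕ) : Finset (Fin d → ℤ) :=
  Finset.Icc (fun _ => -(N : ℤ)) (fun _ => (N : ℤ))

/-- The diagonal copy `H^{[1]} = {(a,a) : a ∈ H}` of a subgroup of `ℤ^d` inside
`ℤ^d × ℤ^d ≅ ℤ^{2d}`. -/
def diagSG {d : ℕ} (H : AddSubgroup (Fin d → ℤ)) :
    AddSubgroup ((Fin d → ℤ) × (Fin d → ℤ)) :=
  H.map ((AddMonoidHom.id _).prod (AddMonoidHom.id _))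

/-! For one subgroup `H₁`, the left-hand side is the squared norm of the projection of
`f ⊗ conj f` onto the vectors fixed by `H₁` acting diagonally, and every `γ ∈ H₁` satisfies
`⟪f ⊗ conj f, (f ⊗ conj f) ∘ (T γ × T γ)⟫ = |∫ Δ_γ f|²`, where `Δ_γ f = f · conj (f ∘ T γ)`. By
Cauchy–Schwarz, `n² |∫ Δ_γ f|²` is at most the sum over the differences `g = x_j - x_i` of any
`n`-tuple `x` of `∫ Δ_g Δ_γ f`, and `∫ Δ_γ Δ_g f = ⟪Δ_g f, Δ_g f ∘ T γ⟫`. A bound between such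
matrix coefficients passes to squared norms of convex combinations of translates, hence to those of
the projections onto the fixed vectors. This bounds `n²` times the left-hand side by the sum of the
seminorms of the `Δ_{x_j - x_i} f`; since multiplicative derivatives commute, the same bound
propagates to several subgroups by induction.

To conclude, the `x_i` are chosen greedily in `H`: by subexponential growth of the boxes, averaging
over the next point shows that the mean over all differences can be made almost as small as the
upper mean over `H`, which is the right-hand side. -/

section UnitaryRepresentations

variable {Γ V W ι κ : Type*} [NormedAddCommGroup V] [InnerProductSpace ℝ V]
  [NormedAddCommGroup W] [InnerProductSpace ℝ W]

/-- The subspace of vectors fixed by an isometric representation `U`; the orthogonal projection onto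
it is the abstract form of the conditional expectation on invariant sets. -/
def fixedVectors [Monoid Γ] (U : Γ →* (V →ₗᵢ[ℝ] V)) : Submodule ℝ V :=
  ⨅ γ, LinearMap.eqLocus (U γ).toLinearMap LinearMap.id

/-- The diagonal representation of `U` on the finite `ℓ²` power `V^ι`; its matrix
coefficients are the sums of `ι`-many matrix coefficients of `U`. -/
def piRep [Monoid Γ] [Fintype ι] (U : Γ →* (V →ₗᵢ[ℝ] V)) :
    Γ →* (PiLp 2 (fun _ : ι => V) →ₗᵢ[ℝ] PiLp 2 (fun _ : ι => V)) where
  toFun γ :=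
    { toFun := fun w => WithLp.toLp 2 fun i => U γ (w i)
      map_add' := fun x y => by ext i; simp
      map_smul' := fun c x => by ext i; simp
      norm_map' := fun x => by simp [PiLp.norm_eq_of_L2] }
  map_one' := by ext; simp
  map_mul' γ δ := by ext; simp

section Monoid

variable [Monoid Γ] (U : Γ →* (V →ₗᵢ[ℝ] V))

lemma mem_fixedVectors {U : Γ →* (V →ₗᵢ[ℝ] V)} {v : V} :
    v ∈ fixedVectors U ↔ ∀ γ, U γ v = v := by
  simp [fixedVectors, Submodule.mem_iInf]

lemma piRep_apply [Fintype ι] (γ : Γ) (w : PiLp 2 fun _ : ι => V) (i : ι) :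
    piRep U γ w i = U γ (w i) := rfl

lemma isClosed_fixedVectors : IsClosed (fixedVectors U : Set V) := by
  have h : (fixedVectors U : Set V) = ⋂ γ, {v | U γ v = v} := by
    ext
    simp [mem_fixedVectors]
  rw [h]
  exact isClosed_iInter fun γ => isClosed_eq (U γ).continuous continuous_id

instance [CompleteSpace V] : CompleteSpace (fixedVectors U) :=
  (isClosed_fixedVectors U).completeSpace_coe

variable [CompleteSpace V]

lemma starProjection_fixedVectors_apply (γ : Γ) (v : V) :
    (fixedVectors U).starProjection (U γ v) = (fixedVectors U).starProjection v := by
  refine Submodule.eq_starProjection_of_mem_of_inner_eq_zero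
    (Submodule.starProjection_apply_mem _ v) fun w hw => ?_
  rw [← mem_fixedVectors.1 (Submodule.starProjection_apply_mem _ v) γ,
    ← mem_fixedVectors.1 hw γ, ← map_sub, LinearIsometry.inner_map_map]
  exact Submodule.starProjection_inner_eq_zero v w hw

lemma starProjection_fixedVectors_sum_smul [Fintype κ] {c : κ → ℝ} (hc : ∑ k, c k = 1)
    (γ : κ → Γ) (v : V) :
    (fixedVectors U).starProjection (∑ k, c k • U (γ k) v)
      = (fixedVectors U).starProjection v := by
  simp only [map_sum, map_smul, starProjection_fixedVectors_apply, ← Finset.sum_smul, hc, one_smul]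

lemma norm_starProjection_fixedVectors_le [Fintype κ] {c : κ → ℝ} (hc : ∑ k, c k = 1)
    (γ : κ → Γ) (v : V) :
    ‖(fixedVectors U).starProjection v‖ ≤ ‖∑ k, c k • U (γ k) v‖ := by
  rw [← starProjection_fixedVectors_sum_smul U hc γ]
  exact Submodule.norm_starProjection_apply_le _ _

-- The vector of least norm in the closed convex hull of an orbit is unique, hence fixed.
lemma exists_mem_closure_convexHull_mem_fixedVectors (v : V) :
    ∃ w ∈ closure (convexHull ℝ (Set.range fun γ => U γ v)), w ∈ fixedVectors U := by
  set K := convexHull ℝ (Set.range fun γ => U γ v)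
  have hKne : (closure K).Nonempty :=
    (convexHull_nonempty_iff.2 (Set.range_nonempty _)).closure
  have hconv : Convex ℝ (closure K) := (convex_convexHull ℝ _).closure
  obtain ⟨w, hw, hwmin⟩ := exists_norm_eq_iInf_of_complete_convex hKne
    isClosed_closure.isComplete hconv 0
  have hmin : ∀ z ∈ closure K, ‖w‖ ≤ ‖z‖ := fun z hz => by
    simp only [zero_sub, norm_neg] at hwmin
    rw [hwmin]
    exact ciInf_le ⟨0, Set.forall_mem_range.2 fun _ => norm_nonneg _⟩ (⟨z, hz⟩ : closure K)
  refine ⟨w, hw, mem_fixedVectors.2 fun γ => ?_⟩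
  have hmaps : Set.MapsTo (U γ) K K := by
    rw [Set.mapsTo_iff_image_subset]
    refine ((U γ).toLinearMap.isLinear.image_convexHull _).subset.trans (convexHull_mono ?_)
    rintro _ ⟨_, ⟨δ, rfl⟩, rfl⟩
    exact ⟨γ * δ, by simp⟩
  have hUw : U γ w ∈ closure K := map_mem_closure (U γ).continuous hw hmaps
  by_contra hne
  have hlt := (norm_midpoint_lt_iff ((U γ).norm_map w)).2 hne
  rw [(U γ).norm_map, smul_add] at hlt
  exact (hmin _ (hconv hUw hw (by norm_num) (by norm_num) (by norm_num))).not_gt hlt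

lemma starProjection_fixedVectors_mem_closure_convexHull (v : V) :
    (fixedVectors U).starProjection v ∈ closure (convexHull ℝ (Set.range fun γ => U γ v)) := by
  set P := (fixedVectors U).starProjection
  obtain ⟨w, hw, hwfix⟩ := exists_mem_closure_convexHull_mem_fixedVectors U v
  have hconv : Convex ℝ {z | P z = P v} :=
    (convex_singleton (P v)).is_linear_preimage P.toLinearMap.isLinear
  have hsub : closure (convexHull ℝ (Set.range fun γ => U γ v)) ⊆ {z | P z = P v} :=
    closure_minimal (convexHull_min
      (Set.range_subset_iff.2 fun γ => starProjection_fixedVectors_apply U γ v) hconv)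
      (isClosed_eq P.continuous continuous_const)
  rwa [← hsub hw, Submodule.starProjection_eq_self_iff.2 hwfix]

lemma le_norm_starProjection_fixedVectors_sq {U : Γ →* (V →ₗᵢ[ℝ] V)} {v : V} {L : ℝ}
    (hL : ∀ (κ : Type) [Fintype κ] (c : κ → ℝ) (γ : κ → Γ), (∀ k, 0 ≤ c k) → ∑ k, c k = 1 →
      L ≤ ‖∑ k, c k • U (γ k) v‖ ^ 2) :
    L ≤ ‖(fixedVectors U).starProjection v‖ ^ 2 := by
  have hclosed : IsClosed {z : V | L ≤ ‖z‖ ^ 2} := isClosed_le continuous_const (by fun_prop)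
  refine closure_minimal (fun z hz => ?_) hclosed
    (starProjection_fixedVectors_mem_closure_convexHull U v)
  obtain ⟨κ, _, c, y, hc0, hc1, hy, rfl⟩ := mem_convexHull_iff_exists_fintype.1 hz
  choose γ hγ using hy
  simpa only [← hγ, Set.mem_ofPred_eq] using hL κ c γ hc0 hc1

lemma starProjection_fixedVectors_piRep [Fintype ι] (w : PiLp 2 fun _ : ι => V) :
    (fixedVectors (piRep U)).starProjection w
      = WithLp.toLp 2 fun i => (fixedVectors U).starProjection (w i) := by
  refine Submodule.eq_starProjection_of_mem_of_inner_eq_zero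
    (mem_fixedVectors.2 fun γ => ?_) fun z hz => ?_
  · ext i
    exact mem_fixedVectors.1 (Submodule.starProjection_apply_mem _ (w i)) γ
  · rw [PiLp.inner_apply]
    exact Finset.sum_eq_zero fun i _ => Submodule.starProjection_inner_eq_zero _ _
      (mem_fixedVectors.2 fun γ => congrArg (· i) (mem_fixedVectors.1 hz γ))

end Monoid

section Group

variable [Group Γ]

lemma norm_sum_smul_apply_sq [Fintype κ] (U : Γ →* (V →ₗᵢ[ℝ] V)) (c : κ → ℝ) (γ : κ → Γ)
    (v : V) :
    ‖∑ k, c k • U (γ k) v‖ ^ 2 = ∑ k, ∑ l, c k * c l * inner ℝ v (U ((γ k)⁻¹ * γ l) v) := by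
  have hU : ∀ a b, inner ℝ (U a v) (U b v) = inner ℝ v (U (a⁻¹ * b) v) := fun a b => by
    rw [← (U a).inner_map_map v, ← Function.comp_apply (f := U a), ← LinearIsometry.coe_mul,
      ← map_mul, mul_inv_cancel_left]
  rw [← real_inner_self_eq_norm_sq, sum_inner]
  refine Finset.sum_congr rfl fun k _ => ?_
  rw [inner_sum]
  refine Finset.sum_congr rfl fun l _ => ?_
  rw [real_inner_smul_left, real_inner_smul_right, hU, mul_assoc]

variable [CompleteSpace V] [CompleteSpace W]
  {U : Γ →* (V →ₗᵢ[ℝ] V)} {U' : Γ →* (W →ₗᵢ[ℝ] W)} {C : ℝ}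

lemma mul_norm_starProjection_fixedVectors_sq_le {v : V} {w : W} (hC : 0 ≤ C)
    (h : ∀ γ, C * inner ℝ w (U' γ w) ≤ inner ℝ v (U γ v)) :
    C * ‖(fixedVectors U').starProjection w‖ ^ 2 ≤ ‖(fixedVectors U).starProjection v‖ ^ 2 := by
  refine le_norm_starProjection_fixedVectors_sq fun κ _ c γ hc0 hc1 => ?_
  calc C * ‖(fixedVectors U').starProjection w‖ ^ 2
      ≤ C * ‖∑ k, c k • U' (γ k) w‖ ^ 2 := by
        gcongr
        exact norm_starProjection_fixedVectors_le U' hc1 γ w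
    _ = ∑ k, ∑ l, c k * c l * (C * inner ℝ w (U' ((γ k)⁻¹ * γ l) w)) := by
        rw [norm_sum_smul_apply_sq]
        simp only [Finset.mul_sum, mul_left_comm C]
    _ ≤ ∑ k, ∑ l, c k * c l * inner ℝ v (U ((γ k)⁻¹ * γ l) v) := by
        gcongr with k _ l _
        · exact mul_nonneg (hc0 k) (hc0 l)
        · exact h _
    _ = ‖∑ k, c k • U (γ k) v‖ ^ 2 := (norm_sum_smul_apply_sq U c γ v).symm

lemma mul_norm_starProjection_fixedVectors_sq_le_sum [Fintype ι] {v : ι → V} {w : W}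
    (hC : 0 ≤ C) (h : ∀ γ, C * inner ℝ w (U' γ w) ≤ ∑ i, inner ℝ (v i) (U γ (v i))) :
    C * ‖(fixedVectors U').starProjection w‖ ^ 2
      ≤ ∑ i, ‖(fixedVectors U).starProjection (v i)‖ ^ 2 := by
  have hpi : C * ‖(fixedVectors U').starProjection w‖ ^ 2
      ≤ ‖(fixedVectors (piRep U)).starProjection (WithLp.toLp 2 v)‖ ^ 2 :=
    mul_norm_starProjection_fixedVectors_sq_le hC fun γ => by
      simpa only [PiLp.inner_apply, piRep_apply] using h γ
  rwa [starProjection_fixedVectors_piRep, PiLp.norm_sq_eq_of_L2] at hpi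

end Group

end UnitaryRepresentations

/-- The maps `T g` form a measure-preserving action of the additive group `G` on `(X, μ)`.
A system is kept unbundled, as a family `T` with this property, to match `hkPow`. -/
structure IsMeasurePreservingAction {G X : Type*} [AddCommGroup G] [MeasurableSpace X]
    (T : G → X → X) (μ : Measure X) : Prop where
  map_zero : T 0 = id
  map_add : ∀ g h, T (g + h) = T g ∘ T h
  measurePreserving : ∀ g, MeasurePreserving (T g) μ μ

namespace IsMeasurePreservingAction

variable {G X : Type*} [AddCommGroup G] [MeasurableSpace X] {T : G → X → X} {μ : Measure X}

lemma apply_apply (hT : IsMeasurePreservingAction T μ) (g h : G) (x : X) :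
    T g (T h x) = T (g + h) x := by
  rw [hT.map_add, Function.comp_apply]

lemma restrict (hT : IsMeasurePreservingAction T μ) (H : AddSubgroup G) :
    IsMeasurePreservingAction (fun a : H => T a) μ where
  map_zero := hT.map_zero
  map_add a b := hT.map_add a b
  measurePreserving a := hT.measurePreserving a

lemma prodMap_self [SFinite μ] (hT : IsMeasurePreservingAction T μ) :
    IsMeasurePreservingAction (fun g => Prod.map (T g) (T g)) (μ.prod μ) where
  map_zero := by rw [hT.map_zero, Prod.map_id]
  map_add g h := by rw [hT.map_add, Prod.map_comp_map]
  measurePreserving g := (hT.measurePreserving g).prod (hT.measurePreserving g)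

end IsMeasurePreservingAction

section InvariantFunctions

variable {ι X : Type*} [m0 : MeasurableSpace X]

lemma invSigma_le (T : ι → X → X) : invSigma T ≤ m0 := fun _ hs => hs.1

lemma measurable_invSigma_iff {E : Type*} [MeasurableSpace E] [MeasurableSingletonClass E]
    {T : ι → X → X} {v : X → E} :
    Measurable[invSigma T] v ↔ Measurable v ∧ ∀ a, v ∘ T a = v := by
  refine ⟨fun hv => ⟨hv.mono (invSigma_le T) le_rfl, fun a => funext fun x => ?_⟩,
    fun hv s hs => ⟨hv.1 hs, fun a => by rw [← Set.preimage_comp, hv.2 a]⟩⟩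
  have hx : x ∈ T a ⁻¹' (v ⁻¹' {v x}) := by
    rw [(hv (measurableSet_singleton (v x))).2 a]
    rfl
  exact hx

lemma invSigma_comp_of_surjective {κ : Type*} (T : ι → X → X) {e : κ → ι}
    (he : Function.Surjective e) : invSigma (T ∘ e) = invSigma T :=
  MeasurableSpace.ext fun s => and_congr_right fun _ =>
    (he.forall (p := fun a => T a ⁻¹' s = s)).symm

end InvariantFunctions

section Koopman

variable {Γ X : Type*} [AddCommGroup Γ] [MeasurableSpace X] {μ : Measure X} {T : Γ → X → X}

/-- The Koopman representation `v ↦ v ∘ T γ` on `L²(μ)`, regarded as a real Hilbert space;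
its fixed vectors are the `invSigma T`-measurable functions. The group is written
multiplicatively so that representations are monoid homomorphisms. -/
def koopman (hT : IsMeasurePreservingAction T μ) :
    Multiplicative Γ →* (Lp ℂ 2 μ →ₗᵢ[ℝ] Lp ℂ 2 μ) where
  toFun γ := Lp.compMeasurePreservingₗᵢ ℝ (T γ.toAdd) (hT.measurePreserving _)
  map_one' := by
    refine LinearIsometry.ext fun v => ?_
    simp only [toAdd_one, hT.map_zero]
    exact Lp.compMeasurePreserving_id_apply v
  map_mul' γ δ := by
    refine LinearIsometry.ext fun v => ?_
    simp only [mul_comm γ δ, toAdd_mul, hT.map_add]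
    exact Lp.compMeasurePreserving_comp_apply v (hT.measurePreserving _) (hT.measurePreserving _)

lemma koopman_coeFn (hT : IsMeasurePreservingAction T μ) (γ : Multiplicative Γ)
    (v : Lp ℂ 2 μ) : koopman hT γ v =ᵐ[μ] v ∘ T γ.toAdd :=
  Lp.coeFn_compMeasurePreserving v (hT.measurePreserving _)

lemma koopman_toLp (hT : IsMeasurePreservingAction T μ) (γ : Multiplicative Γ) {u : X → ℂ}
    (hu : MemLp u 2 μ) :
    koopman hT γ hu.toLp = (hu.comp_measurePreserving (hT.measurePreserving γ.toAdd)).toLp :=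
  Lp.toLp_compMeasurePreserving hu (hT.measurePreserving _)

lemma lpMeas_le_fixedVectors_koopman (hT : IsMeasurePreservingAction T μ) :
    lpMeas ℂ ℝ (invSigma T) 2 μ ≤ fixedVectors (koopman hT) := fun v hv => by
  obtain ⟨w, hw, hvw⟩ := mem_lpMeas_iff_aestronglyMeasurable.1 hv
  refine mem_fixedVectors.2 fun γ => Lp.ext ((koopman_coeFn hT γ v).trans ?_)
  have hcomp := (hT.measurePreserving γ.toAdd).quasiMeasurePreserving.ae_eq_comp hvw
  rw [(measurable_invSigma_iff.1 hw.measurable).2] at hcomp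
  exact hcomp.trans hvw.symm

-- A version of `v` that is invariant everywhere: restrict `v` to the set where `v ∘ T γ = v` for
-- all `γ`, which is invariant because `T` is a group action.
lemma fixedVectors_koopman_le_lpMeas [Countable Γ] (hT : IsMeasurePreservingAction T μ) :
    fixedVectors (koopman hT) ≤ lpMeas ℂ ℝ (invSigma T) 2 μ := fun v hv => by
  classical
  set N : Set X := {x | ∀ γ, v (T γ x) = v x}
  have hvm : Measurable v := (Lp.stronglyMeasurable v).measurable
  have hN : MeasurableSet N := by
    rw [show N = ⋂ γ, {x | v (T γ x) = v x} by ext; simp [N]]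
    exact MeasurableSet.iInter fun γ =>
      measurableSet_eq_fun (hvm.comp (hT.measurePreserving γ).measurable) hvm
  have hNae : ∀ᵐ x ∂μ, x ∈ N := ae_all_iff.2 fun γ => by
    have h := koopman_coeFn hT (.ofAdd γ) v
    rw [mem_fixedVectors.1 hv] at h
    exact h.symm
  have hNinv : ∀ γ x, T γ x ∈ N ↔ x ∈ N := fun γ x => by
    refine ⟨fun h δ => ?_, fun h δ => by rw [hT.apply_apply, h, h]⟩
    have h1 := h (δ + -γ)
    have h2 := h (-γ)
    simp only [hT.apply_apply, neg_add_cancel, neg_add_cancel_right, hT.map_zero, id] at h1 h2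
    rw [h1, h2]
  have hinv : ∀ γ, N.indicator v ∘ T γ = N.indicator v := fun γ => funext fun x => by
    by_cases hx : x ∈ N
    · rw [Function.comp_apply, Set.indicator_of_mem hx, Set.indicator_of_mem ((hNinv γ x).2 hx),
        hx γ]
    · rw [Function.comp_apply, Set.indicator_of_notMem hx,
        Set.indicator_of_notMem (mt (hNinv γ x).1 hx)]
  have hmeas : Measurable[invSigma T] (N.indicator v) :=
    measurable_invSigma_iff.2 ⟨hvm.indicator hN, hinv⟩
  refine mem_lpMeas_iff_aestronglyMeasurable.2 ⟨_, hmeas.stronglyMeasurable, ?_⟩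
  filter_upwards [hNae] with x hx
  rw [Set.indicator_of_mem hx]

lemma lpMeas_eq_fixedVectors_koopman [Countable Γ] (hT : IsMeasurePreservingAction T μ) :
    lpMeas ℂ ℝ (invSigma T) 2 μ = fixedVectors (koopman hT) :=
  (lpMeas_le_fixedVectors_koopman hT).antisymm (fixedVectors_koopman_le_lpMeas hT)

lemma coe_condExpL2_invSigma [Countable Γ] (hT : IsMeasurePreservingAction T μ)
    (v : Lp ℂ 2 μ) :
    (condExpL2 ℂ ℝ (invSigma_le T) v : Lp ℂ 2 μ)
      = (fixedVectors (koopman hT)).starProjection v := by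
  have : Fact (invSigma T ≤ ‹MeasurableSpace X›) := ⟨invSigma_le T⟩
  simp only [← lpMeas_eq_fixedVectors_koopman hT]
  rfl

lemma integral_norm_condExp_invSigma_sq [Countable Γ] [IsFiniteMeasure μ]
    (hT : IsMeasurePreservingAction T μ) {u : X → ℂ} (hu : MemLp u 2 μ) :
    ∫ x, ‖(μ[u | invSigma T]) x‖ ^ 2 ∂μ
      = ‖(fixedVectors (koopman hT)).starProjection hu.toLp‖ ^ 2 := by
  rw [← coe_condExpL2_invSigma hT, ← real_inner_self_eq_norm_sq, L2.inner_def]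
  refine integral_congr_ae ?_
  filter_upwards [hu.condExpL2_ae_eq_condExp (𝕜 := ℝ) (invSigma_le T)] with x hx
  rw [real_inner_self_eq_norm_sq, hx]

end Koopman

section MultiplicativeDerivative

variable {X G ι : Type*}

/-- The multiplicative derivative `Δ_S f = f · conj (f ∘ S)`, which drives the recursion defining
`hkPow`. -/
def multDeriv (S : X → X) (f : X → ℂ) : X → ℂ := fun x => f x * (starRingEnd ℂ) (f (S x))

/-- The function `f ⊗ conj f` on the product system, whose seminorm is to be bounded. -/
def conjTensor (f : X → ℂ) : X × X → ℂ := fun z => f z.1 * (starRingEnd ℂ) (f z.2)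

lemma multDeriv_comm {S S' : X → X} (hS : Function.Commute S S') (f : X → ℂ) :
    multDeriv S (multDeriv S' f) = multDeriv S' (multDeriv S f) := by
  funext x
  simp only [multDeriv, map_mul, Complex.conj_conj, hS.eq x]
  ring

lemma multDeriv_conjTensor (S : X → X) (f : X → ℂ) :
    multDeriv (Prod.map S S) (conjTensor f) = conjTensor (multDeriv S f) := by
  funext z
  simp only [multDeriv, conjTensor, Prod.map_fst, Prod.map_snd, map_mul, Complex.conj_conj]
  ring

variable [MeasurableSpace X] {μ : Measure X} {f : X → ℂ}

lemma memLp_top_multDeriv {S : X → X} (hS : MeasurePreserving S μ μ) (hf : MemLp f ∞ μ) :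
    MemLp (multDeriv S f) ∞ μ :=
  ((hf.comp_measurePreserving hS).star).mul' hf

lemma ae_norm_multDeriv_le {S : X → X} (hS : MeasurePreserving S μ μ) {C : ℝ}
    (hf : ∀ᵐ x ∂μ, ‖f x‖ ≤ C) : ∀ᵐ x ∂μ, ‖multDeriv S f x‖ ≤ C ^ 2 := by
  filter_upwards [hf, hS.quasiMeasurePreserving.ae hf] with x hx hSx
  rw [multDeriv, norm_mul, RCLike.norm_conj, sq]
  exact mul_le_mul hx hSx (norm_nonneg _) ((norm_nonneg _).trans hx)

lemma memLp_top_conjTensor [IsFiniteMeasure μ] (hf : MemLp f ∞ μ) :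
    MemLp (conjTensor f) ∞ (μ.prod μ) :=
  (hf.comp_snd μ).star.mul' (hf.comp_fst μ)

lemma integral_conjTensor [SFinite μ] (f : X → ℂ) :
    ∫ z, conjTensor f z ∂μ.prod μ = (‖∫ x, f x ∂μ‖ ^ 2 : ℝ) := by
  rw [show conjTensor f = fun z => f z.1 * (starRingEnd ℂ) (f z.2) from rfl,
    integral_prod_mul f fun x => (starRingEnd ℂ) (f x), integral_conj, Complex.mul_conj',
    Complex.ofReal_pow]

variable [AddCommGroup G] {T : G → X → X}

lemma inner_toLp_koopman (hT : IsMeasurePreservingAction T μ) (γ : G) (hf : MemLp f 2 μ) :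
    inner ℝ hf.toLp (koopman hT (.ofAdd γ) hf.toLp) = (∫ x, multDeriv (T γ) f x ∂μ).re := by
  have hfγ := hf.comp_measurePreserving (hT.measurePreserving γ)
  have hint : Integrable (multDeriv (T γ) f) μ :=
    memLp_one_iff_integrable.1 (hfγ.star.mul' hf)
  rw [koopman_toLp, L2.inner_def, ← RCLike.re_eq_complex_re, ← integral_re hint]
  refine integral_congr_ae ?_
  filter_upwards [hf.coeFn_toLp, hfγ.coeFn_toLp] with x hx hxγ
  simp [hx, hxγ, multDeriv, mul_comm (f (T γ x)).re, mul_comm (f (T γ x)).im]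

lemma integral_koopman (hT : IsMeasurePreservingAction T μ) (γ : Multiplicative G)
    (v : Lp ℂ 2 μ) : ∫ x, koopman hT γ v x ∂μ = ∫ x, v x ∂μ := by
  have hγ := hT.measurePreserving γ.toAdd
  have hv : AEStronglyMeasurable v (μ.map (T γ.toAdd)) := by
    rw [hγ.map_eq]
    exact Lp.aestronglyMeasurable v
  have h := integral_map hγ.aemeasurable hv
  rw [hγ.map_eq] at h
  exact (integral_congr_ae (koopman_coeFn hT γ v)).trans h.symm

lemma norm_integral_Lp_two_le [IsProbabilityMeasure μ] (v : Lp ℂ 2 μ) :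
    ‖∫ x, v x ∂μ‖ ≤ ‖v‖ := by
  have hv : Integrable v μ := (Lp.memLp v).integrable one_le_two
  calc ‖∫ x, v x ∂μ‖ ≤ ∫ x, ‖v x‖ ∂μ := norm_integral_le_integral_norm _
    _ = (eLpNorm v 1 μ).toReal := by
        rw [integral_norm_eq_lintegral_enorm hv.aestronglyMeasurable,
          eLpNorm_one_eq_lintegral_enorm]
    _ ≤ ‖v‖ := ENNReal.toReal_mono (Lp.eLpNorm_ne_top v)
        (eLpNorm_le_eLpNorm_of_exponent_le one_le_two (Lp.aestronglyMeasurable v))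

-- Both sides come from the vector `∑ i, f ∘ T (x i)`: its integral is `card ι * ∫ f`, and the sum
-- on the right is its squared `L²` norm.
lemma sq_card_mul_norm_integral_sq_le [IsProbabilityMeasure μ] [Fintype ι]
    (hT : IsMeasurePreservingAction T μ) (x : ι → G) (hf : MemLp f 2 μ) :
    (Fintype.card ι : ℝ) ^ 2 * ‖∫ y, f y ∂μ‖ ^ 2
      ≤ ∑ i, ∑ j, (∫ y, multDeriv (T (x j - x i)) f y ∂μ).re := by
  set v : Lp ℂ 2 μ := ∑ i, koopman hT (.ofAdd (x i)) hf.toLp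
  have hint : ∫ y, v y ∂μ = Fintype.card ι * ∫ y, f y ∂μ := by
    rw [integral_congr_ae (Lp.coeFn_fun_finsetSum _ _), integral_finsetSum _ fun i _ =>
      (Lp.memLp (koopman hT (.ofAdd (x i)) hf.toLp)).integrable one_le_two]
    simp [integral_koopman, integral_congr_ae hf.coeFn_toLp]
  calc (Fintype.card ι : ℝ) ^ 2 * ‖∫ y, f y ∂μ‖ ^ 2 = ‖∫ y, v y ∂μ‖ ^ 2 := by
        rw [hint, norm_mul, RCLike.norm_natCast, mul_pow]
    _ ≤ ‖v‖ ^ 2 := by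
        gcongr
        exact norm_integral_Lp_two_le v
    _ = ∑ i, ∑ j, inner ℝ hf.toLp
          (koopman hT ((.ofAdd (x i))⁻¹ * .ofAdd (x j)) hf.toLp) := by
        simpa only [one_smul, one_mul] using norm_sum_smul_apply_sq (koopman hT) (fun _ => 1)
          (fun i => .ofAdd (x i)) hf.toLp
    _ = ∑ i, ∑ j, (∫ y, multDeriv (T (x j - x i)) f y ∂μ).re := by
        refine Finset.sum_congr rfl fun i _ => Finset.sum_congr rfl fun j _ => ?_
        rw [← inner_toLp_koopman hT, ← ofAdd_neg, ← ofAdd_add, neg_add_eq_sub]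

end MultiplicativeDerivative

section ProductSystem

variable {G X ι : Type*} [AddCommGroup G] [MeasurableSpace X] {μ : Measure X} {T : G → X → X}
  {f : X → ℂ}

/-- The diagonal copy `H^{[1]} = {(a, a) : a ∈ H}` of a subgroup `H` of `G` inside `G × G`; it is
`diagSG` when `G = ℤ^d`. -/
def diagSubgroup (H : AddSubgroup G) : AddSubgroup (G × G) :=
  H.map ((AddMonoidHom.id G).prod (AddMonoidHom.id G))

lemma invSigma_diagSubgroup (T : G → X → X) (H : AddSubgroup G) :
    invSigma (fun a : diagSubgroup H => Prod.map (T (a : G × G).1) (T (a : G × G).2))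
      = invSigma fun a : H => Prod.map (T a) (T a) :=
  (invSigma_comp_of_surjective _ (AddMonoidHom.addSubgroupMap_surjective _ H)).symm

lemma multDeriv_action_comm (hT : IsMeasurePreservingAction T μ) (g h : G) (f : X → ℂ) :
    multDeriv (T g) (multDeriv (T h) f) = multDeriv (T h) (multDeriv (T g) f) :=
  multDeriv_comm (fun x => by rw [hT.apply_apply, hT.apply_apply, add_comm]) f

lemma sq_card_mul_integral_condExp_conjTensor_le [IsProbabilityMeasure μ] [Fintype ι] [Countable G]
    (hT : IsMeasurePreservingAction T μ) (H : AddSubgroup G) (x : ι → G) (hf : MemLp f ∞ μ) :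
    (Fintype.card ι : ℝ) ^ 2 *
        ∫ z, ‖((μ.prod μ)[conjTensor f | invSigma fun a : H => Prod.map (T a) (T a)]) z‖ ^ 2
          ∂μ.prod μ
      ≤ ∑ i, ∑ j, ∫ y, ‖(μ[multDeriv (T (x j - x i)) f | invSigma fun a : H => T a]) y‖ ^ 2 ∂μ := by
  have hderiv : ∀ g, MemLp (multDeriv (T g) f) ∞ μ := fun g =>
    memLp_top_multDeriv (hT.measurePreserving g) hf
  have hderiv₂ : ∀ g, MemLp (multDeriv (T g) f) 2 μ := fun g => (hderiv g).mono_exponent le_top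
  have htensor₂ : MemLp (conjTensor f) 2 (μ.prod μ) :=
    (memLp_top_conjTensor hf).mono_exponent le_top
  rw [integral_norm_condExp_invSigma_sq (hT.restrict H).prodMap_self htensor₂,
    ← Fintype.sum_prod_type' fun i j =>
      ∫ y, ‖(μ[multDeriv (T (x j - x i)) f | invSigma fun a : H => T a]) y‖ ^ 2 ∂μ]
  simp only [fun g => integral_norm_condExp_invSigma_sq (hT.restrict H) (hderiv₂ g)]
  refine mul_norm_starProjection_fixedVectors_sq_le_sum (by positivity) fun a => ?_
  obtain ⟨a, rfl⟩ := Multiplicative.ofAdd.surjective a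
  simp only [inner_toLp_koopman, multDeriv_conjTensor, integral_conjTensor, Complex.ofReal_re,
    multDeriv_action_comm hT a, Fintype.sum_prod_type]
  exact sq_card_mul_norm_integral_sq_le hT x (hderiv₂ a)

end ProductSystem

section UpperMean

open scoped BigOperators

variable {G ι : Type*} {S : ℕ → Finset G} {a : G → ℝ} {D : ℝ}

/-- The upper mean `limsup_N 𝔼_{g ∈ S N} a g` of `a` along the averaging sets `S N`,
as in the recursion defining `hkPow`; the mean over an empty `S N` is `0`. -/
def upperMean (S : ℕ → Finset G) (a : G → ℝ) : ℝ := limsup (fun N => 𝔼 g ∈ S N, a g) atTop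

lemma expect_mem_Icc [Nonempty G] (s : Finset G) (ha : ∀ g, a g ∈ Set.Icc 0 D) :
    𝔼 g ∈ s, a g ∈ Set.Icc 0 D := by
  refine ⟨Finset.expect_nonneg fun g _ => (ha g).1, ?_⟩
  rcases s.eq_empty_or_nonempty with rfl | hs
  · obtain ⟨g⟩ := ‹Nonempty G›
    simpa only [Finset.expect_empty] using (ha g).1.trans (ha g).2
  · exact Finset.expect_le hs fun g _ => (ha g).2

lemma upperMean_mem_Icc [Nonempty G] (S : ℕ → Finset G) (ha : ∀ g, a g ∈ Set.Icc 0 D) :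
    upperMean S a ∈ Set.Icc 0 D :=
  ⟨le_limsup_of_frequently_le (.of_forall fun N => (expect_mem_Icc (S N) ha).1)
      (isBoundedUnder_of ⟨D, fun N => (expect_mem_Icc (S N) ha).2⟩),
    limsup_le_of_le (isCoboundedUnder_le_of_le _ fun N => (expect_mem_Icc (S N) ha).1)
      (.of_forall fun N => (expect_mem_Icc (S N) ha).2)⟩

lemma eventually_expect_lt_of_upperMean_lt [Nonempty G] {M : ℝ} (ha : ∀ g, a g ∈ Set.Icc 0 D)
    (hM : upperMean S a < M) : ∀ᶠ N in atTop, 𝔼 g ∈ S N, a g < M :=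
  eventually_lt_of_limsup_lt hM (isBoundedUnder_of ⟨D, fun N => (expect_mem_Icc (S N) ha).2⟩)

lemma upperMean_le_of_eventually {M : ℝ} (ha : ∀ g, 0 ≤ a g)
    (hM : ∀ᶠ N in atTop, 𝔼 g ∈ S N, a g ≤ M) : upperMean S a ≤ M :=
  limsup_le_of_le (isCoboundedUnder_le_of_le _ fun _ => Finset.expect_nonneg fun g _ => ha g) hM

lemma mul_upperMean_le_sum_upperMean [Nonempty G] [Fintype ι] {c : ℝ} {b : ι → G → ℝ} (hc : 0 < c)
    (ha : ∀ g, 0 ≤ a g) (hb : ∀ i g, b i g ∈ Set.Icc 0 D) (h : ∀ g, c * a g ≤ ∑ i, b i g) :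
    c * upperMean S a ≤ ∑ i, upperMean S (b i) := by
  refine le_of_forall_pos_le_add fun ε hε => ?_
  obtain ⟨η, hη, hηε⟩ : ∃ η > 0, Fintype.card ι * η ≤ ε :=
    ⟨ε / (Fintype.card ι + 1), by positivity, by
      rw [mul_div_assoc', div_le_iff₀ (by positivity)]
      nlinarith⟩
  have hev : ∀ᶠ N in atTop, ∀ i, 𝔼 g ∈ S N, b i g < upperMean S (b i) + η :=
    eventually_all.2 fun i =>
      eventually_expect_lt_of_upperMean_lt (hb i) (lt_add_of_pos_right _ hη)
  rw [← le_div_iff₀' hc]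
  refine upperMean_le_of_eventually ha (hev.mono fun N hN => ?_)
  rw [le_div_iff₀' hc]
  calc c * 𝔼 g ∈ S N, a g = 𝔼 g ∈ S N, c * a g := Finset.mul_expect _ _ _
    _ ≤ 𝔼 g ∈ S N, ∑ i, b i g := Finset.expect_le_expect fun g _ => h g
    _ = ∑ i, 𝔼 g ∈ S N, b i g := Finset.expect_sum_comm _ _ _
    _ ≤ ∑ i, (upperMean S (b i) + η) := Finset.sum_le_sum fun i _ => (hN i).le
    _ = ∑ i, upperMean S (b i) + Fintype.card ι * η := by
        rw [Finset.sum_add_distrib, Finset.sum_const, Finset.card_univ, nsmul_eq_mul]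
    _ ≤ ∑ i, upperMean S (b i) + ε := by gcongr

variable [AddCommGroup G]

/-- The sets `box N ∩ K` over which `hkPow` averages along a subgroup `K`. -/
def subgroupBox (box : ℕ → Finset G) (K : AddSubgroup G) (N : ℕ) : Finset G :=
  letI := Classical.decPred fun g : G => g ∈ K
  (box N).filter fun g => g ∈ K

lemma mem_subgroupBox {box : ℕ → Finset G} {K : AddSubgroup G} {N : ℕ} {g : G} :
    g ∈ subgroupBox box K N ↔ g ∈ box N ∧ g ∈ K := by
  simp [subgroupBox]

lemma subgroupBox_diagSubgroup (box : ℕ → Finset G) (K : AddSubgroup G) (N : ℕ) :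
    subgroupBox (fun N => box N ×ˢ box N) (diagSubgroup K) N
      = (subgroupBox box K N).map ⟨fun g => (g, g), fun _ _ h => congrArg Prod.fst h⟩ := by
  ext ⟨g, h⟩
  simp only [mem_subgroupBox, Finset.mem_product, diagSubgroup, AddSubgroup.mem_map, Finset.mem_map]
  constructor
  · rintro ⟨⟨hg, -⟩, x, hx, hxgh⟩
    obtain rfl : x = g := congrArg Prod.fst hxgh
    exact ⟨x, ⟨hg, hx⟩, hxgh⟩
  · rintro ⟨x, ⟨hbox, hx⟩, hxgh⟩
    obtain ⟨rfl, rfl⟩ : x = g ∧ x = h := Prod.ext_iff.1 hxgh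
    exact ⟨⟨hbox, hbox⟩, x, hx, rfl⟩

lemma upperMean_subgroupBox_diagSubgroup (box : ℕ → Finset G) (K : AddSubgroup G) (a : G × G → ℝ) :
    upperMean (subgroupBox (fun N => box N ×ˢ box N) (diagSubgroup K)) a
      = upperMean (subgroupBox box K) fun g => a (g, g) := by
  simp only [upperMean, Finset.expect_eq_sum_div_card, subgroupBox_diagSubgroup, Finset.sum_map,
    Finset.card_map]
  rfl

end UpperMean

section SeminormPowers

variable {G X ι : Type*} [AddCommGroup G] [MeasurableSpace X] {μ : Measure X} {T : G → X → X}
  {f : X → ℂ}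

lemma hkPow_zero (box : ℕ → Finset G) (μ : Measure X) (T : G → X → X)
    (H : Fin 1 → AddSubgroup G) (f : X → ℂ) :
    hkPow box μ T 0 H f = ∫ x, ‖(μ[f | invSigma fun a : H 0 => T a]) x‖ ^ 2 ∂μ := rfl

lemma hkPow_succ (box : ℕ → Finset G) (μ : Measure X) (T : G → X → X) (m : ℕ)
    (H : Fin (m + 2) → AddSubgroup G) (f : X → ℂ) :
    hkPow box μ T (m + 1) H f = upperMean (subgroupBox box (H (Fin.last (m + 1)))) fun g =>
      hkPow box μ T m (fun i => H i.castSucc) (multDeriv (T g) f) := by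
  simp only [upperMean, Finset.expect_eq_sum_div_card, div_eq_inv_mul]
  rfl

lemma hkPow_mem_Icc [IsProbabilityMeasure μ] (box : ℕ → Finset G)
    (hT : ∀ g, MeasurePreserving (T g) μ μ) (m : ℕ) (H : Fin (m + 1) → AddSubgroup G) {C : ℝ}
    (hf : ∀ᵐ x ∂μ, ‖f x‖ ≤ C) : hkPow box μ T m H f ∈ Set.Icc 0 (C ^ 2 ^ (m + 1)) := by
  induction m generalizing f C with
  | zero =>
    rw [hkPow_zero]
    refine ⟨integral_nonneg fun x => sq_nonneg _, ?_⟩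
    have hbound : ∀ᵐ x ∂μ, ‖(μ[f | invSigma fun a : H 0 => T a]) x‖ ^ 2 ≤ C ^ 2 :=
      (ae_bdd_norm_condExp_of_ae_bdd_norm hf).mono fun x hx =>
        pow_le_pow_left₀ (norm_nonneg _) hx 2
    simpa using integral_mono_of_nonneg (.of_forall fun x => sq_nonneg _)
      (integrable_const _) hbound
  | succ m ih =>
    rw [hkPow_succ, pow_succ' 2 (m + 1), pow_mul]
    exact upperMean_mem_Icc _ fun g => ih _ (ae_norm_multDeriv_le (hT g) hf)

lemma hkPow_nonneg [IsProbabilityMeasure μ] (box : ℕ → Finset G)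
    (hT : ∀ g, MeasurePreserving (T g) μ μ) (m : ℕ) (H : Fin (m + 1) → AddSubgroup G)
    (hf : MemLp f ∞ μ) : 0 ≤ hkPow box μ T m H f :=
  (hkPow_mem_Icc box hT m H (ae_le_lpNorm_exponent_top hf)).1

lemma sq_card_mul_hkPow_conjTensor_le [IsProbabilityMeasure μ] [Countable G] [Fintype ι]
    (box : ℕ → Finset G) (hT : IsMeasurePreservingAction T μ) (m : ℕ)
    (H : Fin (m + 1) → AddSubgroup G) (x : ι → G) (hf : MemLp f ∞ μ) :
    (Fintype.card ι : ℝ) ^ 2 * hkPow (fun N => box N ×ˢ box N) (μ.prod μ)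
        (fun g => Prod.map (T g.1) (T g.2)) m (fun i => diagSubgroup (H i)) (conjTensor f)
      ≤ ∑ i, ∑ j, hkPow box μ T m H (multDeriv (T (x j - x i)) f) := by
  induction m generalizing f with
  | zero =>
    simp only [hkPow_zero, invSigma_diagSubgroup]
    exact sq_card_mul_integral_condExp_conjTensor_le hT (H 0) x hf
  | succ m ih =>
    rcases isEmpty_or_nonempty ι with hι | hι
    · simp
    have hmp := hT.measurePreserving
    have hbound := ae_le_lpNorm_exponent_top hf
    simp only [hkPow_succ, upperMean_subgroupBox_diagSubgroup, multDeriv_conjTensor,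
      ← Fintype.sum_prod_type']
    refine mul_upperMean_le_sum_upperMean (by positivity)
      (fun g => hkPow_nonneg _ (fun h : G × G => (hmp h.1).prod (hmp h.2)) m _
        (memLp_top_conjTensor (memLp_top_multDeriv (hmp g) hf)))
      (fun p g => hkPow_mem_Icc box hmp m _
        (ae_norm_multDeriv_le (hmp g) (ae_norm_multDeriv_le (hmp _) hbound))) fun g => ?_
    simp only [multDeriv_action_comm hT g, Fintype.sum_prod_type]
    exact ih _ (memLp_top_multDeriv (hmp g) hf)

end SeminormPowers

section Filtrations

open scoped BigOperators

variable {G ι : Type*} [AddCommGroup G] {S : ℕ → Finset G} {a : G → ℝ} {D M : ℝ}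

/-- A sequence of finite averaging sets of subexponential growth in an abelian group which behaves
like the balls of a translation-invariant distance; the boxes `[-N, N]^d` of `ℤ^d` and their
intersections with a subgroup are the examples needed. -/
structure IsSubexponentialFiltration (S : ℕ → Finset G) : Prop where
  zero_mem : ∀ N, 0 ∈ S N
  sub_mem : ∀ {M N g h}, g ∈ S M → h ∈ S N → g - h ∈ S (M + N)
  isLittleO_card : ∀ r : ℝ, 1 < r → (fun N => (#(S N) : ℝ)) =o[atTop] fun N => r ^ N

lemma mem_boxZ {d N : ℕ} {g : Fin d → ℤ} : g ∈ boxZ d N ↔ ∀ i, |g i| ≤ N := by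
  simp only [boxZ, Finset.mem_Icc, Pi.le_def, ← forall_and, abs_le]

lemma card_boxZ (d N : ℕ) : #(boxZ d N) = (2 * N + 1) ^ d := by
  rw [boxZ, Pi.card_Icc]
  simp only [Int.card_Icc, Finset.prod_const, Finset.card_univ, Fintype.card_fin]
  congr 1
  lia

lemma isSubexponentialFiltration_boxZ (d : ℕ) : IsSubexponentialFiltration (boxZ d) where
  zero_mem N := mem_boxZ.2 fun i => by simp
  sub_mem hg hh := mem_boxZ.2 fun i => by
    rw [Nat.cast_add]
    exact (abs_sub _ _).trans (add_le_add (mem_boxZ.1 hg i) (mem_boxZ.1 hh i))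
  isLittleO_card r hr := by
    have hpoly : (fun N => (#(boxZ d N) : ℝ)) =O[atTop] fun N : ℕ => (N : ℝ) ^ d := by
      refine Asymptotics.IsBigO.of_bound (3 ^ d) ((eventually_ge_atTop 1).mono fun N hN => ?_)
      rw [card_boxZ, Nat.cast_pow, norm_pow, norm_pow, ← mul_pow, Real.norm_natCast,
        Real.norm_natCast]
      gcongr
      exact_mod_cast (by lia : 2 * N + 1 ≤ 3 * N)
    exact hpoly.trans_isLittleO (isLittleO_pow_const_const_pow_of_one_lt d hr)

namespace IsSubexponentialFiltration

lemma card_pos (hS : IsSubexponentialFiltration S) (N : ℕ) : (0 : ℝ) < #(S N) := by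
  exact_mod_cast Finset.card_pos.2 ⟨0, hS.zero_mem N⟩

lemma mem_add_right (hS : IsSubexponentialFiltration S) {g : G} {N : ℕ} (hg : g ∈ S N) (c : ℕ) :
    g ∈ S (N + c) := by
  simpa only [sub_zero] using hS.sub_mem hg (hS.zero_mem c)

lemma restrict (hS : IsSubexponentialFiltration S) (K : AddSubgroup G) :
    IsSubexponentialFiltration (subgroupBox S K) where
  zero_mem N := mem_subgroupBox.2 ⟨hS.zero_mem N, K.zero_mem⟩
  sub_mem hg hh := by
    rw [mem_subgroupBox] at *
    exact ⟨hS.sub_mem hg.1 hh.1, K.sub_mem hg.2 hh.2⟩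
  isLittleO_card r hr := by
    refine (Asymptotics.IsBigO.of_norm_le fun N => ?_).trans_isLittleO (hS.isLittleO_card r hr)
    rw [Real.norm_natCast]
    exact_mod_cast Finset.card_le_card fun g hg => (mem_subgroupBox.1 hg).1

lemma frequently_card_add_le (hS : IsSubexponentialFiltration S) (c : ℕ) {r : ℝ} (hr : 1 < r) :
    ∃ᶠ N in atTop, (#(S (N + c)) : ℝ) ≤ r * #(S N) := by
  rcases eq_or_ne c 0 with rfl | hc
  · exact .of_forall fun N => le_mul_of_one_le_left (Nat.cast_nonneg _) hr.le
  by_contra hev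
  simp only [not_frequently, not_le, eventually_atTop] at hev
  obtain ⟨N₀, hN₀⟩ := hev
  have hgrow : ∀ k : ℕ, r ^ k ≤ #(S (N₀ + c * k)) := by
    intro k
    induction k with
    | zero => simpa using hS.card_pos N₀
    | succ k ih =>
      rw [pow_succ', Nat.mul_succ, ← add_assoc]
      exact (mul_le_mul_of_nonneg_left ih (by positivity)).trans (hN₀ _ (Nat.le_add_right _ _)).le
  obtain ⟨ρ, hρ, hρc⟩ : ∃ ρ : ℝ, 1 < ρ ∧ ρ ^ c = r :=
    ⟨r ^ (c⁻¹ : ℝ), Real.one_lt_rpow hr (by positivity),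
      Real.rpow_inv_natCast_pow (by positivity) hc⟩
  have hsub : (fun k => (#(S (N₀ + c * k)) : ℝ)) =o[atTop] fun k => r ^ k := by
    have htend : Tendsto (fun k => N₀ + c * k) atTop atTop :=
      tendsto_atTop_mono (fun k => (Nat.le_mul_of_pos_left k hc.bot_lt).trans
        (Nat.le_add_left _ _)) tendsto_id
    have h := (hS.isLittleO_card ρ hρ).comp_tendsto htend
    simp only [Function.comp_def, pow_add, pow_mul, hρc] at h
    exact h.of_const_mul_right
  have hself : (fun k : ℕ => r ^ k) =o[atTop] fun k : ℕ => r ^ k := by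
    refine (Asymptotics.IsBigO.of_norm_le fun k => ?_).trans_isLittleO hsub
    rw [Real.norm_of_nonneg (by positivity)]
    exact hgrow k
  exact Asymptotics.isLittleO_irrefl (.of_forall fun k => by positivity) hself

lemma exists_sum_le_card_mul (hS : IsSubexponentialFiltration S) (ha : ∀ g, a g ∈ Set.Icc 0 D)
    (hM : upperMean S a < M) (c : ℕ) : ∃ N, ∑ g ∈ S (N + c), a g ≤ #(S N) * M := by
  obtain ⟨M', hM', hM'M⟩ := exists_between hM
  have hM'0 : 0 < M' := (upperMean_mem_Icc S ha).1.trans_lt hM'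
  have hmean : ∀ᶠ N in atTop, 𝔼 g ∈ S (N + c), a g < M' :=
    (tendsto_add_atTop_nat c).eventually (eventually_expect_lt_of_upperMean_lt ha hM')
  obtain ⟨N, hcard, hN⟩ :=
    ((hS.frequently_card_add_le c ((one_lt_div hM'0).2 hM'M)).and_eventually hmean).exists
  refine ⟨N, ?_⟩
  rw [Finset.expect_eq_sum_div_card, div_lt_iff₀' (hS.card_pos _)] at hN
  calc ∑ g ∈ S (N + c), a g ≤ #(S (N + c)) * M' := hN.le
    _ ≤ M / M' * #(S N) * M' := by gcongr
    _ = #(S N) * M := by field_simp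

lemma exists_sum_translates_le [Fintype ι] (hS : IsSubexponentialFiltration S)
    (ha : ∀ g, a g ∈ Set.Icc 0 D) (hM : upperMean S a < M) {c : ℕ} {x : ι → G}
    (hx : ∀ i, x i ∈ S c) :
    ∃ N, ∃ y ∈ S N, ∑ i, (a (y - x i) + a (x i - y)) ≤ 2 * Fintype.card ι * M := by
  obtain ⟨N, hN⟩ := hS.exists_sum_le_card_mul ha hM c
  have hbij : ∀ φ : G ≃ G, (∀ y ∈ S N, φ y ∈ S (N + c)) →
      ∑ y ∈ S N, a (φ y) ≤ #(S N) * M := fun φ hmaps => by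
    have hsub : (S N).map φ.toEmbedding ⊆ S (N + c) := fun z hz => by
      obtain ⟨y, hy, rfl⟩ := Finset.mem_map.1 hz
      exact hmaps y hy
    calc ∑ y ∈ S N, a (φ y) = ∑ z ∈ (S N).map φ.toEmbedding, a z :=
          (Finset.sum_map (S N) φ.toEmbedding a).symm
      _ ≤ ∑ z ∈ S (N + c), a z :=
          Finset.sum_le_sum_of_subset_of_nonneg hsub fun g _ _ => (ha g).1
      _ ≤ #(S N) * M := hN
  refine ⟨N, Finset.exists_le_of_sum_le ⟨0, hS.zero_mem N⟩ ?_⟩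
  calc ∑ y ∈ S N, ∑ i, (a (y - x i) + a (x i - y))
      = ∑ i, (∑ y ∈ S N, a (y - x i) + ∑ y ∈ S N, a (x i - y)) := by
        rw [Finset.sum_comm]
        simp only [Finset.sum_add_distrib]
    _ ≤ ∑ _i : ι, (#(S N) * M + #(S N) * M) := by
        refine Finset.sum_le_sum fun i _ => add_le_add
          (hbij (.subRight (x i)) fun y hy => hS.sub_mem hy (hx i))
          (hbij (.subLeft (x i)) fun y hy => ?_)
        rw [add_comm]
        exact hS.sub_mem (hx i) hy
    _ = ∑ _y ∈ S N, 2 * Fintype.card ι * M := by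
        simp only [Finset.sum_const, Finset.card_univ, nsmul_eq_mul]
        ring

lemma exists_sum_differences_le (hS : IsSubexponentialFiltration S)
    (ha : ∀ g, a g ∈ Set.Icc 0 D) (hM : upperMean S a < M) (n : ℕ) :
    ∃ c, ∃ x : Fin n → G, (∀ i, x i ∈ S c) ∧
      ∑ i, ∑ j, a (x j - x i) ≤ n * a 0 + n ^ 2 * M := by
  induction n with
  | zero => exact ⟨0, Fin.elim0, fun i => i.elim0, by simp⟩
  | succ n ih =>
    obtain ⟨c, x, hx, hsum⟩ := ih
    obtain ⟨N, y, hy, hxy⟩ := hS.exists_sum_translates_le ha hM hx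
    have hM0 : 0 ≤ M := (upperMean_mem_Icc S ha).1.trans hM.le
    refine ⟨N + c, Fin.cons y x, fun i => ?_, ?_⟩
    · cases i using Fin.cases with
      | zero => exact hS.mem_add_right hy c
      | succ i =>
        rw [Fin.cons_succ, add_comm]
        exact hS.mem_add_right (hx i) N
    · simp only [Fin.sum_univ_succ, Fin.cons_zero, Fin.cons_succ, sub_self,
        Finset.sum_add_distrib, Fintype.card_fin, Nat.cast_add, Nat.cast_one] at hxy ⊢
      linarith

lemma le_upperMean_of_differences (hS : IsSubexponentialFiltration S) {L : ℝ}
    (ha : ∀ g, a g ∈ Set.Icc 0 D)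
    (hL : ∀ (n : ℕ) (x : Fin n → G), (n : ℝ) ^ 2 * L ≤ ∑ i, ∑ j, a (x j - x i)) :
    L ≤ upperMean S a := by
  refine le_of_forall_gt_imp_ge_of_dense fun M hM => ?_
  by_contra! hML
  obtain ⟨n, hn⟩ := exists_nat_gt (a 0 / (L - M))
  rw [div_lt_iff₀ (sub_pos.2 hML)] at hn
  have hn0 : (0 : ℝ) < n := pos_of_mul_pos_left ((ha 0).1.trans_lt hn) (sub_pos.2 hML).le
  obtain ⟨-, x, -, hx⟩ := hS.exists_sum_differences_le ha hM n
  nlinarith [(hL n x).trans hx]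

end IsSubexponentialFiltration

end Filtrations

theorem stmt7_general {G X : Type*} [AddCommGroup G] [Countable G] [MeasurableSpace X]
    {μ : Measure X} [IsProbabilityMeasure μ] {T : G → X → X} {f : X → ℂ} {box : ℕ → Finset G}
    (hbox : IsSubexponentialFiltration box) (hT : IsMeasurePreservingAction T μ) {m : ℕ}
    (H : Fin (m + 1) → AddSubgroup G) (K : AddSubgroup G) (hf : MemLp f ∞ μ) :
    (hkPow (fun N => box N ×ˢ box N) (μ.prod μ) (fun g => Prod.map (T g.1) (T g.2)) m
          (fun i => diagSubgroup (H i)) (conjTensor f)) ^ ((1 : ℝ) / 2 ^ (m + 1))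
      ≤ ((hkPow box μ T (m + 1) (Fin.snoc H K) f) ^ ((1 : ℝ) / 2 ^ (m + 2))) ^ 2 := by
  have hmp := hT.measurePreserving
  have hnonneg := hkPow_nonneg (fun N => box N ×ˢ box N)
    (fun g : G × G => (hmp g.1).prod (hmp g.2)) m (fun i => diagSubgroup (H i))
    (memLp_top_conjTensor hf)
  have hle : hkPow (fun N => box N ×ˢ box N) (μ.prod μ) (fun g => Prod.map (T g.1) (T g.2)) m
      (fun i => diagSubgroup (H i)) (conjTensor f) ≤ hkPow box μ T (m + 1) (Fin.snoc H K) f := by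
    simp only [hkPow_succ, Fin.snoc_last, Fin.snoc_castSucc]
    refine (hbox.restrict K).le_upperMean_of_differences (fun g => hkPow_mem_Icc box hmp m H
      (ae_norm_multDeriv_le (hmp g) (ae_le_lpNorm_exponent_top hf))) fun n x => ?_
    simpa only [Fintype.card_fin] using sq_card_mul_hkPow_conjTensor_le box hT m H x hf
  rw [← Real.rpow_mul_natCast (hnonneg.trans hle),
    show (1 : ℝ) / 2 ^ (m + 2) * (2 : ℕ) = 1 / 2 ^ (m + 1) by push_cast; field_simp; ring]
  exact Real.rpow_le_rpow hnonneg hle (by positivity)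

/-- **Lemma.** `⦀f ⊗ conj f⦀_{H₁^{[1]},…,H_k^{[1]}} ≤ ⦀f⦀²_{H₁,…,H_k,H}`, where the
left-hand seminorm is computed in the product system; here `k = m + 1` and the seminorms
are expressed via their `2^k`-th powers `hkPow`. -/
theorem stmt7 {X : Type*} [MeasurableSpace X] (μ : Measure X) [IsProbabilityMeasure μ]
    (d m : ℕ) (hd : 0 < d)
    (T : (Fin d → ℤ) → X → X)
    (hT0 : T 0 = id) (hTadd : ∀ g h, T (g + h) = T g ∘ T h)
    (hTmp : ∀ g, MeasurePreserving (T g) μ μ)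
    (H : Fin (m + 1) → AddSubgroup (Fin d → ℤ)) (Hx : AddSubgroup (Fin d → ℤ))
    (f : X → ℂ) (hf : Measurable f) (hfb : ∃ C, ∀ x, ‖f x‖ ≤ C) :
    (hkPow (fun N => boxZ d N ×ˢ boxZ d N) (μ.prod μ)
          (fun g xy => (T g.1 xy.1, T g.2 xy.2)) m (fun i => diagSG (H i))
          (fun xy => f xy.1 * (starRingEnd ℂ) (f xy.2))) ^ ((1 : ℝ) / 2 ^ (m + 1))
      ≤ ((hkPow (boxZ d) μ T (m + 1) (Fin.snoc H Hx) f) ^ ((1 : ℝ) / 2 ^ (m + 2))) ^ 2 :=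
  stmt7_general (isSubexponentialFiltration_boxZ d) ⟨hT0, hTadd, hTmp⟩ H Hx
    (hfb.elim fun C hC => memLp_top_of_bound hf.aestronglyMeasurable C (.of_forall hC))
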